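/- arXiv:1907.10468 — 8 statements merged into one kernel-verified Lean document; each statement's English description precedes it below -/
import Mathlib

section
/- Let ⟨R,C⟩ be a win-lose bimatrix game having a Nash equilibrium σ with U_i(σ) = 0 for some player i ∈ {1,2}. Then ⟨R,C⟩ has a pure Nash equilibrium. -/
open Finset

/-- `x` is a probability distribution on the finite type `α`. -/
def IsDist {α : Type*} [Fintype α] (x : α → ℝ) : Prop :=
  (∀ s, 0 ≤ x s) ∧ ∑ s, x s = 1

/-- Expected utility, in a bimatrix game, of the player whose utility matrix is `M`,
when the row player plays `x` and the column player plays `y`. -/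
noncomputable def pay {α : Type*} [Fintype α] (M : α → α → ℝ) (x y : α → ℝ) : ℝ :=
  ∑ s₁, ∑ s₂, x s₁ * y s₂ * M s₁ s₂

/-- `⟨x, y⟩` is a (mixed) Nash equilibrium of the bimatrix game `⟨R, C⟩`. -/
def IsNash {α : Type*} [Fintype α] (R C : α → α → ℝ) (x y : α → ℝ) : Prop :=
  IsDist x ∧ IsDist y ∧
    (∀ x', IsDist x' → pay R x' y ≤ pay R x y) ∧
    (∀ y', IsDist y' → pay C x y' ≤ pay C x y)

/-- All entries of `M` lie in `{0, 1}`. -/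
def WinLose {α : Type*} (M : α → α → ℝ) : Prop :=
  ∀ s₁ s₂, M s₁ s₂ = 0 ∨ M s₁ s₂ = 1

/-- The mixed strategy putting probability 1 on the single pure strategy `s`. -/
def pureStrat {α : Type*} [DecidableEq α] (s : α) : α → ℝ :=
  fun t => if t = s then 1 else 0

theorem isDist_pure {α : Type*} [Fintype α] [DecidableEq α] (s : α) :
    IsDist (pureStrat s) := by
  refine ⟨fun t => ?_, ?_⟩
  · unfold pureStrat; split_ifs <;> norm_num
  · simp [pureStrat]

theorem pay_swap {α : Type*} [Fintype α] (M : α → α → ℝ) (x y : α → ℝ) :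
    pay (fun a b => M b a) y x = pay M x y := by
  unfold pay
  rw [Finset.sum_comm]
  refine Finset.sum_congr rfl fun a _ => Finset.sum_congr rfl fun b _ => by ring

theorem pay_pure_right {α : Type*} [Fintype α] [DecidableEq α] (M : α → α → ℝ)
    (x : α → ℝ) (t : α) : pay M x (pureStrat t) = ∑ s, x s * M s t := by
  simp [pay, pureStrat]

theorem pay_pure_left {α : Type*} [Fintype α] [DecidableEq α] (M : α → α → ℝ)
    (y : α → ℝ) (s : α) : pay M (pureStrat s) y = ∑ t, y t * M s t := by
  rw [← pay_swap, pay_pure_right]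

theorem IsNash.swap {α : Type*} [Fintype α] {R C : α → α → ℝ} {x y : α → ℝ}
    (h : IsNash R C x y) : IsNash (fun a b => C b a) (fun a b => R b a) y x := by
  obtain ⟨h1, h2, h3, h4⟩ := h
  refine ⟨h2, h1, fun x' hx' => ?_, fun y' hy' => ?_⟩
  · rw [pay_swap C, pay_swap C]; exact h4 x' hx'
  · rw [pay_swap R, pay_swap R]; exact h3 y' hy'

theorem IsDist.avg_le {α : Type*} [Fintype α] {x : α → ℝ} (hx : IsDist x)
    {f : α → ℝ} {c : ℝ} (h : ∀ s, f s ≤ c) : ∑ s, x s * f s ≤ c := by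
  calc ∑ s, x s * f s ≤ ∑ s, x s * c :=
        Finset.sum_le_sum fun s _ => mul_le_mul_of_nonneg_left (h s) (hx.1 s)
    _ = c := by rw [← Finset.sum_mul, hx.2, one_mul]

theorem isNash_pure {α : Type*} [Fintype α] [DecidableEq α] {R C : α → α → ℝ} {s t : α}
    (h1 : ∀ s', R s' t ≤ R s t) (h2 : ∀ t', C s t' ≤ C s t) :
    IsNash R C (pureStrat s) (pureStrat t) := by
  have key : ∀ M : α → α → ℝ, pay M (pureStrat s) (pureStrat t) = M s t := by
    intro M
    rw [pay_pure_right]; simp [pureStrat]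
  refine ⟨isDist_pure s, isDist_pure t, fun x' hx' => ?_, fun y' hy' => ?_⟩
  · rw [key, pay_pure_right]; exact hx'.avg_le h1
  · rw [key, pay_pure_left]; exact hy'.avg_le h2

theorem WinLose.nonneg {α : Type*} {M : α → α → ℝ} (h : WinLose M) (s t : α) :
    0 ≤ M s t := by
  rcases h s t with h | h <;> rw [h] <;> norm_num

theorem WinLose.le_one {α : Type*} {M : α → α → ℝ} (h : WinLose M) (s t : α) :
    M s t ≤ 1 := by
  rcases h s t with h | h <;> rw [h] <;> norm_num

theorem eq_zero_of_avg {α : Type*} [Fintype α] {y f : α → ℝ} (hy : IsDist y)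
    (hf : ∀ t, 0 ≤ f t) (h : ∑ t, y t * f t ≤ 0) {t : α} (ht : y t ≠ 0) : f t = 0 := by
  have hnn : ∀ t ∈ Finset.univ, 0 ≤ y t * f t := fun t _ => mul_nonneg (hy.1 t) (hf t)
  have h0 := le_antisymm h (Finset.sum_nonneg hnn)
  have := (Finset.sum_eq_zero_iff_of_nonneg hnn).1 h0 t (Finset.mem_univ t)
  exact (mul_eq_zero.1 this).resolve_left ht

theorem IsDist.exists_ne {α : Type*} [Fintype α] {x : α → ℝ} (hx : IsDist x) :
    ∃ s, x s ≠ 0 := by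
  by_contra! h
  have := hx.2
  simp [h] at this

theorem pure_nash_of_row_zero {α : Type*} [Fintype α] [DecidableEq α]
    (R C : α → α → ℝ) (hR : WinLose R) (hC : WinLose C)
    (x y : α → ℝ) (hNE : IsNash R C x y) (h0 : pay R x y = 0) :
    ∃ s₁ s₂ : α, IsNash R C (pureStrat s₁) (pureStrat s₂) := by
  obtain ⟨hx, hy, h1, h2⟩ := hNE
  have hRz : ∀ s t, y t ≠ 0 → R s t = 0 := by
    intro s t ht
    have h := h1 _ (isDist_pure s)
    rw [h0, pay_pure_left] at h
    exact eq_zero_of_avg hy (fun t => hR.nonneg s t) h ht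
  by_cases hw : ∃ s t, y t ≠ 0 ∧ C s t = 1
  · obtain ⟨s, t, ht, hst⟩ := hw
    refine ⟨s, t, isNash_pure (fun s' => ?_) (fun t' => ?_)⟩
    · rw [hRz s' t ht, hRz s t ht]
    · rw [hst]; exact hC.le_one s t'
  · push Not at hw
    have hCz : pay C x y = 0 := by
      unfold pay
      refine Finset.sum_eq_zero fun s _ => Finset.sum_eq_zero fun t _ => ?_
      by_cases ht : y t = 0
      · rw [ht]; ring
      · rw [(hC s t).resolve_right (hw s t ht)]; ring
    obtain ⟨s, hs⟩ := hx.exists_ne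
    obtain ⟨t, ht⟩ := hy.exists_ne
    have hz : ∀ t', C s t' = 0 := by
      intro t'
      have h := h2 _ (isDist_pure t')
      rw [hCz, pay_pure_right] at h
      exact eq_zero_of_avg hx (f := fun s => C s t') (fun s => hC.nonneg s t') h hs
    refine ⟨s, t, isNash_pure (fun s' => ?_) (fun t' => ?_)⟩
    · rw [hRz s' t ht, hRz s t ht]
    · rw [hz, hz]

/-- If a win-lose bimatrix game has a Nash equilibrium in which some player gets
expected utility `0`, then it has a pure Nash equilibrium. -/
theorem winlose_zero_utility_implies_pure_nash {n : ℕ}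
    (R C : Fin n → Fin n → ℝ) (hR : WinLose R) (hC : WinLose C)
    (x y : Fin n → ℝ) (hNE : IsNash R C x y)
    (h0 : pay R x y = 0 ∨ pay C x y = 0) :
    ∃ s₁ s₂ : Fin n, IsNash R C (pureStrat s₁) (pureStrat s₂) := by
  rcases h0 with h0 | h0
  · exact pure_nash_of_row_zero R C hR hC x y hNE h0
  · obtain ⟨t, s, h⟩ := pure_nash_of_row_zero (fun a b => C b a) (fun a b => R b a)
      (fun a b => hC b a) (fun a b => hR b a) y x hNE.swap (by rw [pay_swap C]; exact h0)
    exact ⟨s, t, h.swap⟩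
end

section
/- For every integer h ≥ 1, the cyclic game Ĝ₁[h] has exactly one Nash equilibrium σ; this Nash equilibrium is fully mixed and uniform (each player plays the uniform distribution on all h strategies) and satisfies U_1(σ) = U_2(σ) = 1/h. Moreover, for h = 1 this Nash equilibrium is Pareto-Optimal and Strongly Pareto-Optimal. -/
open Finset

/-- The Nash equilibrium `⟨x, y⟩` is Pareto-Optimal. -/
def ParetoOpt {α : Type*} [Fintype α] (R C : α → α → ℝ) (x y : α → ℝ) : Prop :=
  ¬ ∃ x' y', IsDist x' ∧ IsDist y' ∧
    (pay R x y < pay R x' y' ∨ pay C x y < pay C x' y') ∧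
    pay R x y ≤ pay R x' y' ∧ pay C x y ≤ pay C x' y'

/-- The Nash equilibrium `⟨x, y⟩` is Strongly Pareto-Optimal. -/
def StrongParetoOpt {α : Type*} [Fintype α] (R C : α → α → ℝ) (x y : α → ℝ) : Prop :=
  ∀ x' y', IsDist x' → IsDist y' →
    (pay R x y < pay R x' y' ∨ pay C x y < pay C x' y') →
    ((x' ≠ x ∧ pay R x' y' ≤ pay R x y) ∨ (y' ≠ y ∧ pay C x' y' ≤ pay C x y))

/-- Utility matrix of the row player in the cyclic game `Ĝ₁[h]`:
she wins exactly when the two players concur. -/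
def cycR (h : ℕ) [NeZero h] : Fin h → Fin h → ℝ :=
  fun s₁ s₂ => if s₂ = s₁ then 1 else 0

/-- Utility matrix of the column player in the cyclic game `Ĝ₁[h]`:
she wins exactly when she follows the row player in the cyclic order. -/
def cycC (h : ℕ) [NeZero h] : Fin h → Fin h → ℝ :=
  fun s₁ s₂ => if s₂ = s₁ + 1 then 1 else 0

/-- The fully mixed uniform strategy on `Fin h`. -/
noncomputable def unif (h : ℕ) : Fin h → ℝ := fun _ => 1 / (h : ℝ)

lemma cyc_payR (h : ℕ) [NeZero h] (x y : Fin h → ℝ) :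
    pay (cycR h) x y = ∑ s, x s * y s := by
  simp [pay, cycR]

lemma cyc_payC (h : ℕ) [NeZero h] (x y : Fin h → ℝ) :
    pay (cycC h) x y = ∑ s, x s * y (s + 1) := by
  simp [pay, cycC]

lemma cyc_sum_shift (h : ℕ) [NeZero h] (y : Fin h → ℝ) :
    ∑ s, y (s + 1) = ∑ s, y s :=
  Equiv.sum_comp (Equiv.addRight (1 : Fin h)) y

lemma cyc_isDist_single (h : ℕ) (t : Fin h) : IsDist (Pi.single t (1 : ℝ) : Fin h → ℝ) := by
  refine ⟨fun s => ?_, by simp⟩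
  by_cases hs : s = t
  · subst hs; simp
  · simp [hs]

lemma cyc_isDist_unif (h : ℕ) [NeZero h] : IsDist (unif h) := by
  have hh : (h : ℝ) ≠ 0 := Nat.cast_ne_zero.mpr (NeZero.ne h)
  refine ⟨fun s => by unfold unif; positivity, ?_⟩
  simp [unif, hh]

lemma cyc_const (h : ℕ) [NeZero h] (x : Fin h → ℝ) (c : ℝ) (hx : IsDist x)
    (hc : ∀ s, x s = c) : x = unif h := by
  have hh : (h : ℝ) ≠ 0 := Nat.cast_ne_zero.mpr (NeZero.ne h)
  have h1 := hx.2
  simp only [hc, sum_const, card_univ, Fintype.card_fin, nsmul_eq_mul] at h1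
  funext s
  rw [hc s, unif]
  field_simp
  linarith

/-- A distribution has a strategy in its support. -/
lemma cyc_exists_pos (h : ℕ) (x : Fin h → ℝ) (hx : IsDist x) : ∃ s, 0 < x s := by
  by_contra! hn
  have := Finset.sum_nonpos (s := univ) (f := x) (fun s _ => hn s)
  linarith [hx.2]

/-- Support condition: if `z ≤ u` pointwise and the `x`-average of `z` is `u`, then `z = u` on the
support of `x`. -/
lemma cyc_support (h : ℕ) (x z : Fin h → ℝ) (u : ℝ) (hx : IsDist x) (hz : ∀ s, z s ≤ u)
    (hu : u = ∑ s, x s * z s) (s : Fin h) (hs : 0 < x s) : z s = u := by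
  have h0 : ∑ s, x s * (u - z s) = 0 := by
    simp only [mul_sub, sum_sub_distrib, ← sum_mul, hx.2]
    linarith
  have h1 := (Finset.sum_eq_zero_iff_of_nonneg
    (fun i _ => mul_nonneg (hx.1 i) (sub_nonneg.mpr (hz i)))).mp h0 s (mem_univ s)
  rcases mul_eq_zero.mp h1 with h2 | h2 <;> linarith

lemma cyc_unique (h : ℕ) [NeZero h] (x y : Fin h → ℝ)
    (hN : IsNash (cycR h) (cycC h) x y) : x = unif h ∧ y = unif h := by
  obtain ⟨hx, hy, hR, hC⟩ := hN
  simp only [cyc_payR, cyc_payC] at hR hC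
  have hyu : ∀ t, y t ≤ ∑ s, x s * y s := fun t => by
    simpa [Pi.single_apply] using hR _ (cyc_isDist_single h t)
  have hC' : ∀ z : Fin h → ℝ, ∑ s, x s * z (s + 1) = ∑ s, z s * x (s - 1) := fun z => by
    rw [← cyc_sum_shift h (fun s => z s * x (s - 1))]
    simp [mul_comm]
  simp only [hC'] at hC
  have hxv : ∀ t, x (t - 1) ≤ ∑ s, y s * x (s - 1) := fun t => by
    simpa [Pi.single_apply] using hC _ (cyc_isDist_single h t)
  have hA := cyc_support h x y _ hx hyu rfl
  have hB := cyc_support h y (fun s => x (s - 1)) _ hy hxv rfl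
  generalize (∑ s, x s * y s) = u at *
  generalize (∑ s, y s * x (s - 1)) = v at *
  obtain ⟨t, ht⟩ := cyc_exists_pos h y hy
  obtain ⟨r, hr⟩ := cyc_exists_pos h x hx
  have hu : 0 < u := ht.trans_le (hyu t)
  have hv : 0 < v := by
    have := hxv (r + 1)
    rw [add_sub_cancel_right] at this
    exact hr.trans_le this
  have step : ∀ s, 0 < x s → 0 < x (s - 1) := fun s hs => by
    have := hB s (by rw [hA s hs]; exact hu)
    rw [this]; exact hv
  have iter : ∀ k : ℕ, 0 < x (r - k • (1 : Fin h)) := by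
    intro k
    induction k with
    | zero => simpa using hr
    | succ k ih =>
      have := step _ ih
      rwa [sub_sub, ← succ_nsmul] at this
  have hall : ∀ s, 0 < x s := fun s => by
    have h1 : (r - s).val • (1 : Fin h) = r - s := by
      open Fin.CommRing in
      rw [nsmul_one, Fin.cast_val_eq_self]
    have := iter (r - s).val
    rwa [h1, sub_sub_cancel] at this
  have hyc : ∀ s, y s = u := fun s => hA s (hall s)
  refine ⟨cyc_const h x v hx fun s => ?_, cyc_const h y u hy hyc⟩
  have := hB (s + 1) (by rw [hyc]; exact hu)
  simpa using this

lemma cyc_payR_unif (h : ℕ) [NeZero h] (x : Fin h → ℝ) (hx : IsDist x) :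
    pay (cycR h) x (unif h) = 1 / (h : ℝ) := by
  simp only [cyc_payR, unif, ← sum_mul, hx.2, one_mul]

lemma cyc_payC_unif (h : ℕ) [NeZero h] (y : Fin h → ℝ) (hy : IsDist y) :
    pay (cycC h) (unif h) y = 1 / (h : ℝ) := by
  simp only [cyc_payC, unif, ← mul_sum, cyc_sum_shift, hy.2, mul_one]

/-- For every `h ≥ 1`, the cyclic game `Ĝ₁[h]` has a single Nash equilibrium, which is
fully mixed and uniform, where both players have expected utility `1/h`; and for `h = 1`
this Nash equilibrium is Pareto-Optimal and Strongly Pareto-Optimal. -/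
theorem cyclic_game_unique_nash (h : ℕ) [NeZero h] :
    IsNash (cycR h) (cycC h) (unif h) (unif h) ∧
    (∀ x y : Fin h → ℝ, IsNash (cycR h) (cycC h) x y → x = unif h ∧ y = unif h) ∧
    (∀ s : Fin h, 0 < unif h s) ∧
    (∀ s t : Fin h, unif h s = unif h t) ∧
    pay (cycR h) (unif h) (unif h) = 1 / (h : ℝ) ∧
    pay (cycC h) (unif h) (unif h) = 1 / (h : ℝ) ∧
    (h = 1 → ParetoOpt (cycR h) (cycC h) (unif h) (unif h) ∧
      StrongParetoOpt (cycR h) (cycC h) (unif h) (unif h)) := by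
  have hd := cyc_isDist_unif h
  refine ⟨⟨hd, hd, fun x' hx' => ?_, fun y' hy' => ?_⟩, cyc_unique h, fun s => ?_,
    fun s t => rfl, cyc_payR_unif h _ hd, cyc_payC_unif h _ hd, fun h1 => ?_⟩
  · rw [cyc_payR_unif h _ hx', cyc_payR_unif h _ hd]
  · rw [cyc_payC_unif h _ hy', cyc_payC_unif h _ hd]
  · have : 0 < h := NeZero.pos h
    unfold unif
    positivity
  · have key : ∀ x : Fin h → ℝ, IsDist x → x = unif h := fun x hx => by
      subst h1
      exact cyc_const 1 x (x 0) hx fun s => by rw [Subsingleton.elim s 0]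
    constructor
    · rintro ⟨x', y', hx', hy', hlt, -, -⟩
      rw [key x' hx', key y' hy'] at hlt
      rcases hlt with hlt | hlt <;> exact absurd hlt (lt_irrefl _)
    · intro x' y' hx' hy' hlt
      rw [key x' hx', key y' hy'] at hlt
      rcases hlt with hlt | hlt <;> exact absurd hlt (lt_irrefl _)
end

section
/- The 3-player win-lose game Ĝ₂ has exactly one Nash equilibrium, and this Nash equilibrium is irrational (it assigns an irrational probability to some strategy); explicitly, it is the mixed profile with σ_1(0) = (√5 − 1)/2, σ_2(0) = (3 − √5)/2, σ_3(0) = (1 + √5)/8, σ_3(1) = (5 − √5)/8 and σ_3(2) = 1/4. -/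
open Finset

/-- Utility function of player 1 in the 3-player win-lose game `Ĝ₂`. -/
noncomputable def u₁ : Fin 2 → Fin 2 → Fin 3 → ℝ :=
  ![![![1, 1, 0], ![0, 1, 0]], ![![0, 0, 1], ![1, 0, 1]]]

/-- Utility function of player 2 in the 3-player win-lose game `Ĝ₂`. -/
noncomputable def u₂ : Fin 2 → Fin 2 → Fin 3 → ℝ :=
  ![![![0, 1, 1], ![1, 0, 0]], ![![0, 1, 0], ![1, 0, 1]]]

/-- Utility function of player 3 in the 3-player win-lose game `Ĝ₂`. -/
noncomputable def u₃ : Fin 2 → Fin 2 → Fin 3 → ℝ :=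
  ![![![1, 0, 0], ![0, 0, 1]], ![![1, 1, 0], ![0, 1, 0]]]

/-- Expected utility in the 3-player game. -/
noncomputable def eu3 (u : Fin 2 → Fin 2 → Fin 3 → ℝ)
    (x y : Fin 2 → ℝ) (z : Fin 3 → ℝ) : ℝ :=
  ∑ a, ∑ b, ∑ c, x a * y b * z c * u a b c

/-- `⟨x, y, z⟩` is a (mixed) Nash equilibrium of `Ĝ₂`. -/
def IsNashG2 (x y : Fin 2 → ℝ) (z : Fin 3 → ℝ) : Prop :=
  IsDist x ∧ IsDist y ∧ IsDist z ∧
    (∀ x', IsDist x' → eu3 u₁ x' y z ≤ eu3 u₁ x y z) ∧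
    (∀ y', IsDist y' → eu3 u₂ x y' z ≤ eu3 u₂ x y z) ∧
    (∀ z', IsDist z' → eu3 u₃ x y z' ≤ eu3 u₃ x y z)

/-- The unique Nash equilibrium of `Ĝ₂`, which is irrational. -/
noncomputable def xstar : Fin 2 → ℝ := ![(Real.sqrt 5 - 1) / 2, (3 - Real.sqrt 5) / 2]

noncomputable def ystar : Fin 2 → ℝ := ![(3 - Real.sqrt 5) / 2, (Real.sqrt 5 - 1) / 2]

noncomputable def zstar : Fin 3 → ℝ := ![(1 + Real.sqrt 5) / 8, (5 - Real.sqrt 5) / 8, 1 / 4]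

lemma core (p q a b c : ℝ) (hp : 0 ≤ p) (hp1 : p ≤ 1) (hq : 0 ≤ q) (hq1 : q ≤ 1)
    (ha : 0 ≤ a) (hb : 0 ≤ b) (hc : 0 ≤ c) (hs : a + b + c = 1)
    (h1 : 0 ≤ p * (b - c + (2*q-1)*a)) (h1' : (1-p) * (b - c + (2*q-1)*a) ≤ 0)
    (h2 : 0 ≤ q * (b - a + (2*p-1)*c)) (h2' : (1-q) * (b - a + (2*p-1)*c) ≤ 0)
    (v0 : q ≤ a * q + b * (1-p) + c * (p*(1-q)))
    (v1 : 1-p ≤ a * q + b * (1-p) + c * (p*(1-q)))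
    (v2 : p*(1-q) ≤ a * q + b * (1-p) + c * (p*(1-q))) :
    p = (Real.sqrt 5 - 1) / 2 ∧ q = (3 - Real.sqrt 5) / 2 ∧
    a = (1 + Real.sqrt 5) / 8 ∧ b = (5 - Real.sqrt 5) / 8 ∧ c = 1/4 := by
  obtain ⟨V, hV⟩ : ∃ V, V = a * q + b * (1-p) + c * (p*(1-q)) := ⟨_, rfl⟩
  rw [← hV] at v0 v1 v2
  have e : a * (V - q) + b * (V - (1-p)) + c * (V - p*(1-q)) = 0 := by
    linear_combination V * hs + hV
  have t0 := mul_nonneg ha (sub_nonneg.2 v0)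
  have t1 := mul_nonneg hb (sub_nonneg.2 v1)
  have t2 := mul_nonneg hc (sub_nonneg.2 v2)
  have e0 : a = 0 ∨ V = q := by
    have : a * (V - q) = 0 := by linarith
    rcases mul_eq_zero.1 this with h | h
    · exact Or.inl h
    · right; linarith
  have e1 : b = 0 ∨ V = 1 - p := by
    have : b * (V - (1-p)) = 0 := by linarith
    rcases mul_eq_zero.1 this with h | h
    · exact Or.inl h
    · right; linarith
  have e2 : c = 0 ∨ V = p*(1-q) := by
    have : c * (V - p*(1-q)) = 0 := by linarith
    rcases mul_eq_zero.1 this with h | h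
    · exact Or.inl h
    · right; linarith
  clear e t0 t1 t2 hV
  have p0 : 0 < p := by
    rcases hp.eq_or_lt with h | h
    · exfalso
      subst h
      have hc0 : c = 0 := by rcases e2 with h | h <;> linarith
      subst hc0
      rcases e0 with h | h
      · subst h; linarith
      · have : q = 1 := by linarith
        subst this; linarith
    · exact h
  have p1 : p < 1 := by
    rcases hp1.eq_or_lt with h | h
    · exfalso
      subst h
      have hb0 : b = 0 := by rcases e1 with h | h <;> linarith
      subst hb0
      rcases e0 with h | h
      · subst h; linarith
      · rcases e2 with h' | h'
        · subst h'
          have : a = 1 := by linarith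
          subst this; linarith
        · have : q = 1/2 := by linarith
          subst this; linarith
    · exact h
  have d1 : b - c + (2*q-1)*a = 0 := by
    apply le_antisymm
    · exact nonpos_of_mul_nonpos_right h1' (by linarith)
    · exact nonneg_of_mul_nonneg_right h1 p0
  have q0 : 0 < q := by
    rcases hq.eq_or_lt with h | h
    · exfalso
      subst h
      have ha0 : a = 0 := by rcases e0 with h | h <;> linarith
      subst ha0
      have : c = 1/2 := by linarith
      subst this
      linarith
    · exact h
  have q1 : q < 1 := by
    rcases hq1.eq_or_lt with h | h
    · exfalso
      subst h
      have : c = 0 := by rcases e2 with h | h <;> linarith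
      subst this
      linarith
    · exact h
  have d2 : b - a + (2*p-1)*c = 0 := by
    apply le_antisymm
    · exact nonpos_of_mul_nonpos_right h2' (by linarith)
    · exact nonneg_of_mul_nonneg_right h2 q0
  have a0 : 0 < a := by
    rcases ha.eq_or_lt with h | h
    · exfalso
      subst h
      have hbc : b = c := by linarith
      subst hbc
      have : b = 1/2 := by linarith
      subst this; linarith
    · exact h
  have c0 : 0 < c := by
    rcases hc.eq_or_lt with h | h
    · exfalso
      subst h
      have hbc : b = a := by linarith
      subst hbc
      have : b = 1/2 := by linarith
      subst this; linarith
    · exact h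
  have b0 : 0 < b := by
    rcases hb.eq_or_lt with h | h
    · exfalso
      subst h
      have := mul_pos a0 (sub_pos.2 q1)
      have := mul_pos c0 (sub_pos.2 p1)
      linarith
    · exact h
  have f0 : V = q := e0.resolve_left a0.ne'
  have f1 : V = 1 - p := e1.resolve_left b0.ne'
  have f2 : V = p*(1-q) := e2.resolve_left c0.ne'
  have hqp : q = 1 - p := by linarith
  subst hqp
  have s5 : Real.sqrt 5 = 2*p+1 := by
    rw [Real.sqrt_eq_iff_mul_self_eq (by norm_num) (by linarith)]
    linarith
  have hpp : p * p = 1 - p := by linarith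
  have hap : a * (p * p) = a * (1 - p) := by rw [hpp]
  have hc4 : c = a * p := by
    apply mul_left_cancel₀ p0.ne'
    linarith
  subst hc4
  have ha4 : a * p = 1/4 := by linarith
  have ha' : a = (1+p)/4 := by
    apply mul_right_cancel₀ p0.ne'
    linarith
  rw [s5]
  refine ⟨by ring, by ring, by linarith, by linarith, ha4⟩

lemma dist2 (t : ℝ) (h : 0 ≤ t) (h1 : t ≤ 1) : IsDist ![t, 1 - t] := by
  refine ⟨fun s => ?_, by simp [Fin.sum_univ_two]⟩
  fin_cases s
  · simpa using h
  · simpa using h1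

lemma dist3 (a b c : ℝ) (ha : 0 ≤ a) (hb : 0 ≤ b) (hc : 0 ≤ c) (h : a + b + c = 1) :
    IsDist ![a, b, c] := by
  refine ⟨fun s => ?_, by simpa [Fin.sum_univ_three] using h⟩
  fin_cases s <;> simpa

lemma eu1 (x y : Fin 2 → ℝ) (z : Fin 3 → ℝ) : eu3 u₁ x y z =
    x 0 * (y 0 * (z 0 + z 1) + y 1 * z 1) + x 1 * (y 0 * z 2 + y 1 * (z 0 + z 2)) := by
  simp [eu3, u₁, Fin.sum_univ_two, Fin.sum_univ_three]; ring

lemma eu2 (x y : Fin 2 → ℝ) (z : Fin 3 → ℝ) : eu3 u₂ x y z =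
    y 0 * (x 0 * (z 1 + z 2) + x 1 * z 1) + y 1 * (x 0 * z 0 + x 1 * (z 0 + z 2)) := by
  simp [eu3, u₂, Fin.sum_univ_two, Fin.sum_univ_three]; ring

lemma eu3' (x y : Fin 2 → ℝ) (z : Fin 3 → ℝ) : eu3 u₃ x y z =
    z 0 * ((x 0 + x 1) * y 0) + z 1 * (x 1 * (y 0 + y 1)) + z 2 * (x 0 * y 1) := by
  simp [eu3, u₃, Fin.sum_univ_two, Fin.sum_univ_three]; ring

/-- The 3-player win-lose game `Ĝ₂` has exactly one Nash equilibrium, namely the explicit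
profile `⟨xstar, ystar, zstar⟩`, and this Nash equilibrium is irrational. -/
theorem G2_unique_nash_is_irrational :
    IsNashG2 xstar ystar zstar ∧
    (∀ x y z, IsNashG2 x y z → x = xstar ∧ y = ystar ∧ z = zstar) ∧
    ((∃ a, Irrational (xstar a)) ∨ (∃ b, Irrational (ystar b)) ∨
      (∃ c, Irrational (zstar c))) := by
  have s5 : Real.sqrt 5 * Real.sqrt 5 = 5 := Real.mul_self_sqrt (by norm_num)
  have s0 : 2 < Real.sqrt 5 := by
    rw [Real.lt_sqrt (by norm_num)]; norm_num
  have s1 : Real.sqrt 5 < 3 := by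
    rw [Real.sqrt_lt' (by norm_num)]; norm_num
  refine ⟨⟨?_, ?_, ?_, ?_, ?_, ?_⟩, ?_, ?_⟩
  · have := dist2 ((Real.sqrt 5 - 1) / 2) (by linarith) (by linarith)
    convert this using 2
    unfold xstar; congr 2; ring
  · have := dist2 ((3 - Real.sqrt 5) / 2) (by linarith) (by linarith)
    convert this using 2
    unfold ystar; congr 2; ring
  · exact dist3 _ _ _ (by linarith) (by linarith) (by norm_num) (by ring)
  · rintro x' ⟨-, h⟩
    rw [Fin.sum_univ_two] at h
    have h' : x' 1 = 1 - x' 0 := by linarith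
    rw [eu1, eu1, h']
    simp only [xstar, ystar, zstar, Matrix.cons_val]
    apply le_of_eq
    generalize Real.sqrt 5 = s at *
    generalize x' 0 = t
    grind
  · rintro x' ⟨-, h⟩
    rw [Fin.sum_univ_two] at h
    have h' : x' 1 = 1 - x' 0 := by linarith
    rw [eu2, eu2, h']
    simp only [xstar, ystar, zstar, Matrix.cons_val]
    apply le_of_eq
    generalize Real.sqrt 5 = s at *
    generalize x' 0 = t
    grind
  · rintro x' ⟨-, h⟩
    rw [Fin.sum_univ_three] at h
    have h' : x' 2 = 1 - x' 0 - x' 1 := by linarith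
    rw [eu3', eu3', h']
    simp only [xstar, ystar, zstar, Matrix.cons_val]
    apply le_of_eq
    generalize Real.sqrt 5 = s at *
    generalize x' 0 = t
    generalize x' 1 = t'
    grind
  · rintro x y z ⟨⟨hx, hxs⟩, ⟨hy, hys⟩, ⟨hz, hzs⟩, h1, h2, h3⟩
    rw [Fin.sum_univ_two] at hxs hys
    rw [Fin.sum_univ_three] at hzs
    have hx1 : x 1 = 1 - x 0 := by linarith
    have hy1 : y 1 = 1 - y 0 := by linarith
    have A0 := h1 _ (dist2 0 le_rfl zero_le_one)
    have A1 := h1 _ (dist2 1 zero_le_one le_rfl)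
    have B0 := h2 _ (dist2 0 le_rfl zero_le_one)
    have B1 := h2 _ (dist2 1 zero_le_one le_rfl)
    have C0 := h3 _ (dist3 1 0 0 zero_le_one le_rfl le_rfl (by norm_num))
    have C1 := h3 _ (dist3 0 1 0 le_rfl zero_le_one le_rfl (by norm_num))
    have C2 := h3 _ (dist3 0 0 1 le_rfl le_rfl zero_le_one (by norm_num))
    simp only [eu1, eu2, eu3', hx1, hy1, Matrix.cons_val] at A0 A1 B0 B1 C0 C1 C2
    have X1 := hx 1
    have Y1 := hy 1
    obtain ⟨r1, r2, r3, r4, r5⟩ := core (x 0) (y 0) (z 0) (z 1) (z 2) (hx 0) (by linarith) (hy 0)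
      (by linarith) (hz 0) (hz 1) (hz 2) hzs (by linarith) (by linarith) (by linarith)
      (by linarith) (by linarith) (by linarith) (by linarith)
    refine ⟨?_, ?_, ?_⟩
    · funext i
      fin_cases i
      · simpa [xstar] using r1
      · simp [xstar, hx1, r1]; ring
    · funext i
      fin_cases i
      · simpa [ystar] using r2
      · simp [ystar, hy1, r2]; ring
    · funext i
      fin_cases i
      · simpa [zstar] using r3
      · simpa [zstar] using r4
      · simpa [zstar] using r5
  · left
    refine ⟨0, ?_⟩
    have h5 : Irrational (Real.sqrt 5) := by
      simpa using Nat.Prime.irrational_sqrt (p := 5) (by norm_num)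
    rintro ⟨r, hr⟩
    apply h5
    refine ⟨2 * r + 1, ?_⟩
    simp only [xstar, Matrix.cons_val] at hr
    push_cast
    linarith
end

section
/- In every Nash equilibrium σ of the win-lose bimatrix game Ĝ₃, both players have support of size at least 2: |Supp(σ_1)| ≥ 2 and |Supp(σ_2)| ≥ 2. -/
open Finset

/-- Utility matrix of the row player in the game `Ĝ₃`. -/
noncomputable def G3R : Fin 4 → Fin 4 → ℝ :=
  ![![0, 0, 1, 1], ![0, 1, 1, 0], ![0, 1, 0, 1], ![1, 0, 0, 0]]

/-- Utility matrix of the column player in the game `Ĝ₃`. -/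
noncomputable def G3C : Fin 4 → Fin 4 → ℝ :=
  ![![1, 1, 0, 0], ![1, 0, 0, 1], ![1, 0, 1, 0], ![0, 1, 1, 1]]

lemma exists_single_of_ncard_lt (x : Fin 4 → ℝ) (hx : IsDist x)
    (h : ¬ 2 ≤ {s | 0 < x s}.ncard) : ∃ s, x = Pi.single s 1 := by
  obtain ⟨h0, h1⟩ := hx
  have hle : {s | 0 < x s}.ncard ≤ 1 := by omega
  rw [Set.ncard_le_one (Set.toFinite _)] at hle
  have hex : ∃ s, 0 < x s := by
    by_contra hc
    push Not at hc
    have : ∑ s, x s ≤ 0 := Finset.sum_nonpos fun i _ => hc i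
    linarith
  obtain ⟨s, hs⟩ := hex
  have hz : ∀ t, t ≠ s → x t = 0 := by
    intro t ht
    by_contra hne
    exact ht (hle t (lt_of_le_of_ne (h0 t) (Ne.symm hne)) s hs)
  have hs1 : x s = 1 := by
    rw [← h1]
    exact (Finset.sum_eq_single s (fun t _ ht => hz t ht) (by simp)).symm
  refine ⟨s, funext fun t => ?_⟩
  by_cases ht : t = s
  · subst ht; simp [hs1]
  · simp [hz t ht, ht]

lemma isDist_single (s : Fin 4) : IsDist (Pi.single s 1 : Fin 4 → ℝ) := by
  refine ⟨fun t => ?_, by simp⟩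
  by_cases ht : t = s
  · subst ht; simp
  · simp [ht]

lemma pay_single_left (M : Fin 4 → Fin 4 → ℝ) (s : Fin 4) (y : Fin 4 → ℝ) :
    pay M (Pi.single s 1) y = ∑ t, y t * M s t := by
  unfold pay
  rw [Finset.sum_eq_single s (fun t _ ht => by simp [ht]) (by simp)]
  simp

lemma pay_single_right (M : Fin 4 → Fin 4 → ℝ) (s : Fin 4) (x : Fin 4 → ℝ) :
    pay M x (Pi.single s 1) = ∑ t, x t * M t s := by
  unfold pay
  refine Finset.sum_congr rfl fun t _ => ?_
  rw [Finset.sum_eq_single s (fun u _ hu => by simp [hu]) (by simp)]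
  simp

/-- In every Nash equilibrium of the win-lose bimatrix game `Ĝ₃`, both players have
support of size at least 2. -/
theorem G3_supports_at_least_two (x y : Fin 4 → ℝ) (hNE : IsNash G3R G3C x y) :
    2 ≤ {s | 0 < x s}.ncard ∧ 2 ≤ {s | 0 < y s}.ncard := by
  obtain ⟨hx, hy, hR, hC⟩ := hNE
  have hRs := fun s => hR _ (isDist_single s)
  have hCs := fun s => hC _ (isDist_single s)
  constructor
  · by_contra hcon
    obtain ⟨s, rfl⟩ := exists_single_of_ncard_lt x hx hcon
    obtain ⟨hy0, hy1⟩ := hy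
    simp only [pay_single_left] at hRs hCs
    have a0 := hRs 0
    have a1 := hRs 1
    have a2 := hRs 2
    have a3 := hRs 3
    have b0 := hCs 0
    have b1 := hCs 1
    fin_cases s <;>
      simp [Fin.sum_univ_four, G3R, G3C, Pi.single_apply] at a0 a1 a2 a3 b0 b1 hy1 <;>
      linarith [hy0 0, hy0 1, hy0 2, hy0 3]
  · by_contra hcon
    obtain ⟨s, rfl⟩ := exists_single_of_ncard_lt y hy hcon
    obtain ⟨hx0, hx1⟩ := hx
    simp only [pay_single_right] at hRs hCs
    have a0 := hRs 0
    have a1 := hRs 1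
    have a3 := hRs 3
    have b0 := hCs 0
    have b1 := hCs 1
    have b2 := hCs 2
    have b3 := hCs 3
    fin_cases s <;>
      simp [Fin.sum_univ_four, G3R, G3C, Pi.single_apply] at a0 a1 a3 b0 b1 b2 b3 hx1 <;>
      linarith [hx0 0, hx0 1, hx0 2, hx0 3]
end

section
/- The win-lose bimatrix game Ĝ₄ has no symmetric Nash equilibrium, i.e., no Nash equilibrium ⟨σ_1, σ_2⟩ with σ_1 = σ_2. -/
open Finset

/-- Utility matrix of the row player in the game `Ĝ₄`. -/
noncomputable def G4R : Fin 3 → Fin 3 → ℝ :=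
  ![![1, 0, 1], ![0, 0, 1], ![0, 1, 0]]

/-- Utility matrix of the column player in the game `Ĝ₄`. -/
noncomputable def G4C : Fin 3 → Fin 3 → ℝ :=
  ![![0, 1, 0], ![1, 0, 0], ![1, 0, 1]]

/-- The win-lose bimatrix game `Ĝ₄` has no symmetric Nash equilibrium:
no Nash equilibrium `⟨σ₁, σ₂⟩` with `σ₁ = σ₂`. -/
theorem G4_no_symmetric_nash :
    ¬ ∃ x y : Fin 3 → ℝ, IsNash G4R G4C x y ∧ x = y := by
  rintro ⟨x, y, ⟨⟨hx0, hx1⟩, -, hR, hC⟩, rfl⟩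
  have d : ∀ i : Fin 3, IsDist (fun j : Fin 3 => if j = i then (1 : ℝ) else 0) := by
    intro i
    refine ⟨fun s => by dsimp only; split_ifs <;> norm_num, by simp⟩
  have r0 := hR _ (d 0)
  have r1 := hR _ (d 1)
  have r2 := hR _ (d 2)
  have c0 := hC _ (d 0)
  have c1 := hC _ (d 1)
  have c2 := hC _ (d 2)
  have ha := hx0 0
  have hb := hx0 1
  have hc := hx0 2
  simp [pay, G4R, G4C, Fin.sum_univ_three] at r0 r1 r2 c0 c1 c2 hx1
  generalize x 0 = a at *
  generalize x 1 = b at *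
  generalize x 2 = c at *
  clear hR hC hx0 d
  obtain ⟨v, hv⟩ : ∃ v, v = a * a + a * c + b * c + c * b := ⟨_, rfl⟩
  obtain ⟨w, hw⟩ : ∃ w, w = a * b + b * a + c * a + c * c := ⟨_, rfl⟩
  have p0 : 0 ≤ v - (a + c) := by linarith
  have p1 : 0 ≤ v - c := by linarith
  have p2 : 0 ≤ v - b := by linarith
  have q0 : 0 ≤ w - (b + c) := by linarith
  have q1 : 0 ≤ w - a := by linarith
  have q2 : 0 ≤ w - c := by linarith
  have hc' : c = 1 - a - b := by linarith
  have s : a * (v - (a + c)) + b * (v - c) + c * (v - b) = 0 := by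
    rw [hv, hc']; ring
  have t : a * (w - (b + c)) + b * (w - a) + c * (w - c) = 0 := by
    rw [hw, hc']; ring
  have s0 := mul_nonneg ha p0
  have s1 := mul_nonneg hb p1
  have s2 := mul_nonneg hc p2
  have t0 := mul_nonneg ha q0
  have t1 := mul_nonneg hb q1
  have t2 := mul_nonneg hc q2
  have e1 : b * (v - c) = 0 := by linarith
  have e2 : c * (v - b) = 0 := by linarith
  have f0 : a * (w - (b + c)) = 0 := by linarith
  have f2 : c * (w - c) = 0 := by linarith
  have f1 : b * (w - a) = 0 := by linarith
  rcases mul_eq_zero.1 e1 with h | h <;> rcases mul_eq_zero.1 e2 with h' | h' <;>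
  rcases mul_eq_zero.1 f0 with k | k <;> rcases mul_eq_zero.1 f2 with k' | k' <;>
  rcases mul_eq_zero.1 f1 with l | l <;> first | linarith | (subst_vars; nlinarith)
end

section
/- Fix a win-lose bimatrix game ⟨R,C⟩ with the positive utility property and consider any Nash equilibrium σ = ⟨σ_1, σ_2⟩ of its GHR-symmetrization ⟨S, Sᵀ⟩. Then exactly one of the following three cases holds: (C.1) ←σ_1, →σ_1, ←σ_2, →σ_2 are all nonzero vectors; (C.2) ←σ_1 = →σ_2 = 0ⁿ and →σ_1, ←σ_2 are both nonzero; (C.3) →σ_1 = ←σ_2 = 0ⁿ and ←σ_1, →σ_2 are both nonzero. -/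
open Finset

/-- The matrix `S = [[0, R], [Cᵀ, 0]]` of the GHR-symmetrization of `⟨R, C⟩`. -/
def ghrS {n : ℕ} (R C : Fin n → Fin n → ℝ) :
    (Fin n ⊕ Fin n) → (Fin n ⊕ Fin n) → ℝ
  | .inl i, .inr j => R i j
  | .inr i, .inl j => C j i
  | _, _ => 0

/-- The transpose `Sᵀ` of the matrix of the GHR-symmetrization. -/
def ghrST {n : ℕ} (R C : Fin n → Fin n → ℝ) :
    (Fin n ⊕ Fin n) → (Fin n ⊕ Fin n) → ℝ :=
  fun a b => ghrS R C b a

/-- The restriction `←x` of a mixed strategy on `[2n]` to the first `n` strategies. -/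
def leftPart {n : ℕ} (x : (Fin n ⊕ Fin n) → ℝ) : Fin n → ℝ := fun i => x (Sum.inl i)

/-- The restriction `→x` of a mixed strategy on `[2n]` to the last `n` strategies. -/
def rightPart {n : ℕ} (x : (Fin n ⊕ Fin n) → ℝ) : Fin n → ℝ := fun i => x (Sum.inr i)

/-- Case (C.1): all four half-vectors are nonzero. -/
def TriC1 {n : ℕ} (x y : (Fin n ⊕ Fin n) → ℝ) : Prop :=
  leftPart x ≠ 0 ∧ rightPart x ≠ 0 ∧ leftPart y ≠ 0 ∧ rightPart y ≠ 0

/-- Case (C.2): `←σ₁ = →σ₂ = 0ⁿ` and `→σ₁, ←σ₂` are nonzero. -/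
def TriC2 {n : ℕ} (x y : (Fin n ⊕ Fin n) → ℝ) : Prop :=
  leftPart x = 0 ∧ rightPart y = 0 ∧ rightPart x ≠ 0 ∧ leftPart y ≠ 0

/-- Case (C.3): `→σ₁ = ←σ₂ = 0ⁿ` and `←σ₁, →σ₂` are nonzero. -/
def TriC3 {n : ℕ} (x y : (Fin n ⊕ Fin n) → ℝ) : Prop :=
  rightPart x = 0 ∧ leftPart y = 0 ∧ leftPart x ≠ 0 ∧ rightPart y ≠ 0

/-- Every strategy in the support of a best response is a pure best response. -/
theorem aux_support {α : Type*} [Fintype α] (M : α → α → ℝ) (x y : α → ℝ)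
    (hx : IsDist x) (hb : ∀ x', IsDist x' → pay M x' y ≤ pay M x y)
    (a a' : α) (ha : 0 < x a) : ∑ b, y b * M a' b ≤ ∑ b, y b * M a b := by
  classical
  have hp : ∀ z : α → ℝ, pay M z y = ∑ s, z s * ∑ b, y b * M s b := by
    intro z
    simp only [pay, Finset.mul_sum, mul_assoc]
  by_cases haa : a' = a
  · rw [haa]
  have h := hb (fun s => x s + (if s = a' then x a else 0) - (if s = a then x a else 0)) (by
    refine ⟨?_, ?_⟩
    · intro s
      have := hx.1 s
      dsimp only
      split_ifs with h1 h2 h2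
      · linarith
      · linarith
      · rw [h2]; linarith
      · linarith
    · simp [Finset.sum_sub_distrib, Finset.sum_add_distrib, hx.2])
  rw [hp, hp] at h
  simp only [sub_mul, add_mul, Finset.sum_sub_distrib, Finset.sum_add_distrib, ite_mul, zero_mul,
    Finset.sum_ite_eq', Finset.sum_ite_eq, Finset.mem_univ, if_true] at h
  have h3 : x a * ∑ b, y b * M a' b ≤ x a * ∑ b, y b * M a b := by linarith
  exact le_of_mul_le_mul_left h3 ha

theorem aux_nonzero {n : ℕ} (x : (Fin n ⊕ Fin n) → ℝ) (hx : IsDist x) :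
    ¬ (leftPart x = 0 ∧ rightPart x = 0) := by
  rintro ⟨h1, h2⟩
  have h := hx.2
  have e1 : ∀ i, x (Sum.inl i) = 0 := fun i => congrFun h1 i
  have e2 : ∀ i, x (Sum.inr i) = 0 := fun i => congrFun h2 i
  simp [Fintype.sum_sum_type, e1, e2] at h

theorem aux_left {n : ℕ} (R C : Fin n → Fin n → ℝ) (hR : WinLose R)
    (pupR : ∀ s₂, ∃ s₁, 0 < R s₁ s₂) (x y : (Fin n ⊕ Fin n) → ℝ)
    (hx : IsDist x) (hy : IsDist y)
    (hb : ∀ x', IsDist x' → pay (ghrS R C) x' y ≤ pay (ghrS R C) x y)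
    (h0 : leftPart y = 0) : rightPart x = 0 := by
  have e1 : ∀ i, y (Sum.inl i) = 0 := fun i => congrFun h0 i
  have hne : rightPart y ≠ 0 := fun h => aux_nonzero y hy ⟨h0, h⟩
  obtain ⟨j, hj⟩ := Function.ne_iff.mp hne
  have hj' : 0 < y (Sum.inr j) := lt_of_le_of_ne (hy.1 _) (Ne.symm hj)
  obtain ⟨i, hi⟩ := pupR j
  funext k
  by_contra hk
  have hk' : 0 < x (Sum.inr k) := lt_of_le_of_ne (hx.1 _) (Ne.symm hk)
  have h := aux_support _ x y hx hb (Sum.inr k) (Sum.inl i) hk'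
  simp only [Fintype.sum_sum_type, ghrS, e1, zero_mul, mul_zero, Finset.sum_const_zero, zero_add,
    add_zero] at h
  have hpos : 0 < ∑ b, y (Sum.inr b) * R i b :=
    Finset.sum_pos' (fun b _ => mul_nonneg (hy.1 _) (by rcases hR i b with h | h <;> simp [h]))
      ⟨j, Finset.mem_univ _, mul_pos hj' hi⟩
  linarith

theorem aux_right {n : ℕ} (R C : Fin n → Fin n → ℝ) (hC : WinLose C)
    (pupC : ∀ s₁, ∃ s₂, 0 < C s₁ s₂) (x y : (Fin n ⊕ Fin n) → ℝ)
    (hx : IsDist x) (hy : IsDist y)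
    (hb : ∀ x', IsDist x' → pay (ghrS R C) x' y ≤ pay (ghrS R C) x y)
    (h0 : rightPart y = 0) : leftPart x = 0 := by
  have e1 : ∀ i, y (Sum.inr i) = 0 := fun i => congrFun h0 i
  have hne : leftPart y ≠ 0 := fun h => aux_nonzero y hy ⟨h, h0⟩
  obtain ⟨j, hj⟩ := Function.ne_iff.mp hne
  have hj' : 0 < y (Sum.inl j) := lt_of_le_of_ne (hy.1 _) (Ne.symm hj)
  obtain ⟨i, hi⟩ := pupC j
  funext k
  by_contra hk
  have hk' : 0 < x (Sum.inl k) := lt_of_le_of_ne (hx.1 _) (Ne.symm hk)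
  have h := aux_support _ x y hx hb (Sum.inl k) (Sum.inr i) hk'
  simp only [Fintype.sum_sum_type, ghrS, e1, zero_mul, mul_zero, Finset.sum_const_zero, zero_add,
    add_zero] at h
  have hpos : 0 < ∑ b, y (Sum.inl b) * C b i :=
    Finset.sum_pos' (fun b _ => mul_nonneg (hy.1 _) (by rcases hC b i with h | h <;> simp [h]))
      ⟨j, Finset.mem_univ _, mul_pos hj' hi⟩
  linarith

theorem aux_pay {n : ℕ} (R C : Fin n → Fin n → ℝ) (x y : (Fin n ⊕ Fin n) → ℝ) :
    pay (ghrST R C) x y = pay (ghrS R C) y x := by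
  unfold pay ghrST
  rw [Finset.sum_comm]
  refine Finset.sum_congr rfl fun a _ => Finset.sum_congr rfl fun b _ => ?_
  ring

/-- For a win-lose bimatrix game with the positive utility property, every Nash
equilibrium of its GHR-symmetrization satisfies exactly one of the three cases
(C.1), (C.2), (C.3). -/
theorem ghr_nash_trichotomy {n : ℕ}
    (R C : Fin n → Fin n → ℝ) (hR : WinLose R) (hC : WinLose C)
    (pupR : ∀ s₂, ∃ s₁, 0 < R s₁ s₂) (pupC : ∀ s₁, ∃ s₂, 0 < C s₁ s₂)
    (x y : (Fin n ⊕ Fin n) → ℝ)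
    (hNE : IsNash (ghrS R C) (ghrST R C) x y) :
    (TriC1 x y ∧ ¬ TriC2 x y ∧ ¬ TriC3 x y) ∨
    (¬ TriC1 x y ∧ TriC2 x y ∧ ¬ TriC3 x y) ∨
    (¬ TriC1 x y ∧ ¬ TriC2 x y ∧ TriC3 x y) := by
  obtain ⟨hx, hy, h1, h2⟩ := hNE
  simp only [aux_pay] at h2
  have a1 := aux_left R C hR pupR x y hx hy h1
  have a2 := aux_right R C hC pupC x y hx hy h1
  have a3 := aux_left R C hR pupR y x hy hx h2
  have a4 := aux_right R C hC pupC y x hy hx h2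
  have a5 := aux_nonzero x hx
  have a6 := aux_nonzero y hy
  unfold TriC1 TriC2 TriC3
  tauto
end

section
/- Let ⟨R,C⟩ be a win-lose bimatrix game with the positive utility property and let τ and ρ be Nash equilibria of ⟨R,C⟩. Then for each player i ∈ {1,2}, the expected utility of player i in the balanced mixture τ ∗ ρ (computed in the GHR-symmetrization) satisfies Ũ_i(τ ∗ ρ) < max{ Ū_1(ρ), Ū_1(τ), Ū_2(ρ), Ū_2(τ) }. -/
open Finset

/-- The pair `p` is a Nash equilibrium of the bimatrix game `⟨R, C⟩`. -/
def NEPair {α : Type*} [Fintype α] (R C : α → α → ℝ) (p : (α → ℝ) × (α → ℝ)) : Prop :=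
  IsNash R C p.1 p.2

/-- The balanced mixture `a ∗ b` of `a` and `b`, a mixed profile of the
GHR-symmetrization of `⟨R, C⟩` (the two halves of each strategy vector being indexed
by `Fin n ⊕ Fin n`). -/
noncomputable def bmix {n : ℕ} (R C : Fin n → Fin n → ℝ)
    (a b : (Fin n → ℝ) × (Fin n → ℝ)) :
    ((Fin n ⊕ Fin n) → ℝ) × ((Fin n ⊕ Fin n) → ℝ) :=
  ( Sum.elim (fun s => pay R b.1 b.2 / (pay R b.1 b.2 + pay C a.1 a.2) * a.1 s)
             (fun s => pay C a.1 a.2 / (pay R b.1 b.2 + pay C a.1 a.2) * b.2 s),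
    Sum.elim (fun s => pay R a.1 a.2 / (pay R a.1 a.2 + pay C b.1 b.2) * b.1 s)
             (fun s => pay C b.1 b.2 / (pay R a.1 a.2 + pay C b.1 b.2) * a.2 s) )

theorem IsDist.exists_pos {n : ℕ} {y : Fin n → ℝ} (hy : IsDist y) : ∃ s, 0 < y s := by
  by_contra! h
  have h1 : ∑ s, y s ≤ 0 := Finset.sum_nonpos fun s _ => h s
  rw [hy.2] at h1
  linarith

theorem isDist_pure_s12 {n : ℕ} (s : Fin n) : IsDist (fun t : Fin n => if t = s then (1 : ℝ) else 0) := by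
  refine ⟨fun t => ?_, by simp⟩
  dsimp only
  split_ifs <;> norm_num

theorem NEPair.pay_R_pos {n : ℕ} {R C : Fin n → Fin n → ℝ} (hR : WinLose R)
    (pupR : ∀ s₂, ∃ s₁, 0 < R s₁ s₂) {p : (Fin n → ℝ) × (Fin n → ℝ)} (h : NEPair R C p) :
    0 < pay R p.1 p.2 := by
  obtain ⟨hx, hy, h1, h2⟩ := h
  obtain ⟨s, hs⟩ := hy.exists_pos
  obtain ⟨t, ht⟩ := pupR s
  refine lt_of_lt_of_le ?_ (h1 _ (isDist_pure_s12 t))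
  have hn : ∀ a b, 0 ≤ R a b := fun a b => by rcases hR a b with h | h <;> rw [h]; norm_num
  simp only [pay, ite_mul, one_mul, zero_mul]
  rw [Finset.sum_eq_single t (by intro b _ hb; simp [hb]) (by simp)]
  simp only [if_true]
  exact Finset.sum_pos' (fun i _ => mul_nonneg (hy.1 i) (hn t i))
    ⟨s, Finset.mem_univ _, mul_pos hs ht⟩

theorem NEPair.pay_C_pos {n : ℕ} {R C : Fin n → Fin n → ℝ} (hC : WinLose C)
    (pupC : ∀ s₁, ∃ s₂, 0 < C s₁ s₂) {p : (Fin n → ℝ) × (Fin n → ℝ)} (h : NEPair R C p) :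
    0 < pay C p.1 p.2 := by
  obtain ⟨hx, hy, h1, h2⟩ := h
  obtain ⟨s, hs⟩ := hx.exists_pos
  obtain ⟨t, ht⟩ := pupC s
  refine lt_of_lt_of_le ?_ (h2 _ (isDist_pure_s12 t))
  have hn : ∀ a b, 0 ≤ C a b := fun a b => by rcases hC a b with h | h <;> rw [h]; norm_num
  simp only [pay, mul_ite, ite_mul, mul_one, mul_zero, zero_mul, Finset.sum_ite_eq',
    Finset.mem_univ, if_true]
  exact Finset.sum_pos' (fun i _ => mul_nonneg (hx.1 i) (hn i t))
    ⟨s, Finset.mem_univ _, mul_pos hs ht⟩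

theorem pay_ghrS {n : ℕ} (R C : Fin n → Fin n → ℝ) (a b c d : ℝ) (f g h k : Fin n → ℝ) :
    pay (ghrS R C) (Sum.elim (fun s => a * f s) (fun s => b * g s))
      (Sum.elim (fun s => c * h s) (fun s => d * k s)) =
      a * d * pay R f k + b * c * pay C h g := by
  simp only [pay, Fintype.sum_sum_type, Sum.elim_inl, Sum.elim_inr, ghrS, mul_zero,
    Finset.sum_const_zero, zero_add, add_zero, Finset.mul_sum]
  congr 1
  · exact Finset.sum_congr rfl fun i _ => Finset.sum_congr rfl fun j _ => by ring
  · rw [Finset.sum_comm]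
    exact Finset.sum_congr rfl fun i _ => Finset.sum_congr rfl fun j _ => by ring

theorem pay_ghrST {n : ℕ} (R C : Fin n → Fin n → ℝ) (x y : Fin n ⊕ Fin n → ℝ) :
    pay (ghrST R C) x y = pay (ghrS R C) y x := by
  unfold pay ghrST
  rw [Finset.sum_comm]
  exact Finset.sum_congr rfl fun i _ => Finset.sum_congr rfl fun j _ => by ring

theorem harm_aux {a b c d : ℝ} (ha : 0 < a) (hb : 0 < b) (hc : 0 < c) (hd : 0 < d) :
    c / (c + d) * (b / (a + b)) * a + d / (c + d) * (a / (a + b)) * b < a := by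
  have : c / (c + d) * (b / (a + b)) * a + d / (c + d) * (a / (a + b)) * b
      = a * b / (a + b) := by
    field_simp
  rw [this, div_lt_iff₀ (by positivity)]
  nlinarith

/-- For Nash equilibria `τ`, `ρ` of a win-lose bimatrix game `⟨R, C⟩` with the positive
utility property, each player's expected utility in the balanced mixture `τ ∗ ρ`,
computed in the GHR-symmetrization `⟨S, Sᵀ⟩`, is strictly below the maximum of the four
expected utilities `Ū₁(ρ), Ū₁(τ), Ū₂(ρ), Ū₂(τ)`. -/
theorem balanced_mixture_utility_lt_max {n : ℕ}
    (R C : Fin n → Fin n → ℝ) (hR : WinLose R) (hC : WinLose C)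
    (pupR : ∀ s₂, ∃ s₁, 0 < R s₁ s₂) (pupC : ∀ s₁, ∃ s₂, 0 < C s₁ s₂)
    (τ ρ : (Fin n → ℝ) × (Fin n → ℝ))
    (hτ : NEPair R C τ) (hρ : NEPair R C ρ) :
    pay (ghrS R C) (bmix R C τ ρ).1 (bmix R C τ ρ).2 <
      max (max (pay R ρ.1 ρ.2) (pay R τ.1 τ.2)) (max (pay C ρ.1 ρ.2) (pay C τ.1 τ.2)) ∧
    pay (ghrST R C) (bmix R C τ ρ).1 (bmix R C τ ρ).2 <
      max (max (pay R ρ.1 ρ.2) (pay R τ.1 τ.2)) (max (pay C ρ.1 ρ.2) (pay C τ.1 τ.2)) := by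
  have hA1 := hτ.pay_R_pos hR pupR
  have hA2 := hτ.pay_C_pos hC pupC
  have hB1 := hρ.pay_R_pos hR pupR
  have hB2 := hρ.pay_C_pos hC pupC
  rw [pay_ghrST]
  simp only [bmix, pay_ghrS]
  constructor
  · exact lt_of_lt_of_le (harm_aux hA1 hB2 hB1 hA2)
      (le_trans (le_max_right _ _) (le_max_left _ _))
  · have h := harm_aux hB1 hA2 hA1 hB2
    exact lt_of_lt_of_le (lt_of_eq_of_lt (by ring) h)
      (le_trans (le_max_left _ _) (le_max_left _ _))
end

section
/- For the win-lose game G = G(Ĝ, φ) constructed from an r-player win-lose game Ĝ with the positive utility property and a 3SAT formula φ with n ≥ 4 variables, the following two conditions hold: (C.1) every Nash equilibrium of Ĝ, regarded via the inclusions Σ̂_i ⊆ Σ_i as a mixed profile of G, is a Nash equilibrium of G; (C.2) there is no Nash equilibrium σ of G outside NE(Ĝ) such that Supp(σ_i) ⊆ Σ̂_i for some player i ∈ {1,…,r}. -/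
open Finset

/-- Expected utility of player `i` in the mixed profile `σ`. -/
noncomputable def EU {ι : Type*} [Fintype ι] [DecidableEq ι] {S : ι → Type*}
    [∀ i, Fintype (S i)] (U : (i : ι) → (∀ j, S j) → ℝ)
    (σ : ∀ j, S j → ℝ) (i : ι) : ℝ :=
  ∑ s : ∀ j, S j, (∏ j, σ j (s j)) * U i s

/-- `σ` is a (mixed) Nash equilibrium of the game with utilities `U`. -/
def IsNashEq {ι : Type*} [Fintype ι] [DecidableEq ι] {S : ι → Type*} [∀ i, Fintype (S i)]
    (U : (i : ι) → (∀ j, S j) → ℝ) (σ : ∀ j, S j → ℝ) : Prop :=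
  (∀ i, IsDist (σ i)) ∧
    ∀ (i : ι) (τ : S i → ℝ), IsDist τ →
      EU U (Function.update σ i τ) i ≤ EU U σ i

/-! ## The player and strategy sets of the game `G(Ĝ, φ)` -/

/-- The players: the two special players (`Sum.inl`), plus `k` further players. -/
abbrev Player (k : ℕ) : Type := Fin 2 ⊕ Fin k

/-- A literal `ℓ_j` (second component `true`) or `ℓ̄_j` (second component `false`). -/
abbrev Lit (n : ℕ) : Type := Fin n × Bool

/-- A pair variable `v_{j,k}` with `j ≠ k`. -/
abbrev PairVar (n : ℕ) : Type := {p : Fin n × Fin n // p.1 ≠ p.2}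

/-- The non-gadget strategies of a special player: literals, clauses and pair variables. -/
abbrev SpecialAux (n m : ℕ) : Type := Lit n ⊕ (Fin m ⊕ PairVar n)

/-- The strategy set of each player of `G(Ĝ, φ)`: gadget strategies together with the
literals, clauses and pair variables (for the special players), resp. the single extra
strategy `δ` (for the non-special players). -/
def Strat {k : ℕ} (Shat : Player k → Type) (n m : ℕ) : Player k → Type
  | .inl p => Shat (.inl p) ⊕ SpecialAux n m
  | .inr q => Shat (.inr q) ⊕ PUnit

instance {k n m : ℕ} (Shat : Player k → Type) [∀ i, Fintype (Shat i)]
    (i : Player k) : Fintype (Strat Shat n m i) := by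
  cases i with
  | inl p => exact inferInstanceAs (Fintype (Shat (.inl p) ⊕ SpecialAux n m))
  | inr q => exact inferInstanceAs (Fintype (Shat (.inr q) ⊕ PUnit))

/-- The gadget strategy underlying a strategy of `G(Ĝ, φ)`, if any. -/
def toGadget {k n m : ℕ} (Shat : Player k → Type) :
    ∀ i : Player k, Strat Shat n m i → Option (Shat i)
  | .inl _, .inl a => some a
  | .inl _, .inr _ => none
  | .inr _, .inl a => some a
  | .inr _, .inr _ => none

/-- The strategy chosen by the special player `q` in the profile `s`. -/
def specialOf {k n m : ℕ} (Shat : Player k → Type) (q : Fin 2)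
    (s : ∀ j, Strat Shat n m j) : Shat (.inl q) ⊕ SpecialAux n m :=
  s (.inl q)

/-- The other special player. -/
def otherP : Fin 2 → Fin 2 := fun p => if p = 0 then 1 else 0

/-- Whether a strategy of a special player lies in `{ℓ₀, ℓ̄₀, ℓ₁, ℓ̄₁} ∪ 𝒞 ∪ V`
(Case (10) of the utility table). -/
def allowedB {n m : ℕ} {α : Type*} : α ⊕ SpecialAux n m → Bool
  | .inl _ => false
  | .inr (.inl l) => decide (l.1.val ≤ 1)
  | .inr (.inr _) => true

/-- Utilities ⟨player 1, player 2, each non-special player⟩ in a profile in which the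
special players choose the non-gadget strategies `a₁`, `a₂` and every non-special player
chooses `δ` (Cases (1)–(6) and part of Case (11) of the utility table).  The cyclic
difference `I(ℓ′) − I(ℓ)` is computed as `(I(ℓ′) + n − I(ℓ)) % n`. -/
noncomputable def pairU {n m : ℕ} (Cl : Fin m → Finset (Lit n)) :
    SpecialAux n m → SpecialAux n m → ℝ × ℝ × ℝ
  | .inl l, .inl l' =>
      if l' = (l.1, !l.2) then (0, 0, 1)
      else if (l'.1.val + n - l.1.val) % n ≤ 1 then (1, 0, 1)
      else if (l'.1.val + n - l.1.val) % n ≤ 3 then (0, 1, 1)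
      else (0, 0, 1)
  | .inl l, .inr (.inl c) => if (l.1, !l.2) ∈ Cl c then (0, 1, 1) else (0, 0, 0)
  | .inl l, .inr (.inr v) => if l.1 = v.1.1 ∨ l.1 = v.1.2 then (0, 1, 1) else (0, 0, 0)
  | .inr (.inl c), .inl l => if (l.1, !l.2) ∈ Cl c then (1, 0, 1) else (0, 0, 0)
  | .inr (.inr v), .inl l => if l.1 = v.1.1 ∨ l.1 = v.1.2 then (1, 0, 1) else (0, 0, 0)
  | .inr _, .inr _ => (0, 0, 0)

/-- The utility function of the game `G(Ĝ, φ)`, following Cases (1)–(11) of the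
utility table. -/
noncomputable def BigU {k n m : ℕ} (Shat : Player k → Type) [∀ i, Fintype (Shat i)]
    (Uhat : (i : Player k) → (∀ j, Shat j) → ℝ) (Cl : Fin m → Finset (Lit n))
    (i : Player k) (s : ∀ j, Strat Shat n m j) : ℝ :=
  -- Case (7): all players choose gadget strategies
  if h : ∀ j, (toGadget Shat j (s j)).isSome = true then
    Uhat i (fun j => (toGadget Shat j (s j)).get (h j))
  -- Case (8): at least two, but not all, players choose gadget strategies
  else if 1 < (univ.filter fun j => (toGadget Shat j (s j)).isSome = true).card then
    if (toGadget Shat i (s i)).isSome then 1 else 0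
  -- Cases (9), (10), (11): exactly one player chooses a gadget strategy
  else if (univ.filter fun j => (toGadget Shat j (s j)).isSome = true).card = 1 then
    if (toGadget Shat i (s i)).isSome then
      match i with
      | .inl p => if allowedB (specialOf Shat (otherP p) s) then 1 else 0
      | .inr _ => 1
    else 0
  -- Cases (1)–(6), (11): no player chooses a gadget strategy, so every non-special
  -- player chooses `δ` and the special players choose non-gadget strategies
  else
    match specialOf Shat 0 s, specialOf Shat 1 s with
    | .inr a₁, .inr a₂ =>
        (match i with
         | .inl p => if p = 0 then (pairU Cl a₁ a₂).1 else (pairU Cl a₁ a₂).2.1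
         | .inr _ => (pairU Cl a₁ a₂).2.2)
    | _, _ => 0

/-- A mixed profile of the gadget game `Ĝ`, regarded as a mixed profile of `G(Ĝ, φ)`
via the inclusions `Σ̂ᵢ ⊆ Σᵢ`. -/
def liftProfile {k n m : ℕ} (Shat : Player k → Type)
    (σh : ∀ i, Shat i → ℝ) : ∀ i, Strat Shat n m i → ℝ
  | .inl p => Sum.elim (σh (.inl p)) (fun _ => 0)
  | .inr q => Sum.elim (σh (.inr q)) (fun _ => 0)

/-- The strategy "literal `(j, b)`" of the special player `p`. -/
def litStrat {k n m : ℕ} (Shat : Player k → Type) (p : Fin 2) (j : Fin n) (b : Bool) :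
    Strat Shat n m (Sum.inl p) :=
  Sum.inr (Sum.inl (j, b))

/-- The strategy `δ` of the non-special player `q`. -/
def deltaStrat {k n m : ℕ} (Shat : Player k → Type) (q : Fin k) :
    Strat Shat n m (Sum.inr q) :=
  Sum.inr PUnit.unit

/-- The assignment `γ` satisfies the 3SAT formula with clauses `Cl`. -/
def Satisfies {n m : ℕ} (Cl : Fin m → Finset (Lit n)) (γ : Fin n → Bool) : Prop :=
  ∀ c, ∃ l ∈ Cl c, γ l.1 = l.2


section aux
open Classical

variable {ι : Type*} [Fintype ι] [DecidableEq ι] {S : ι → Type*} [∀ i, Fintype (S i)]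

/-- Expected utility of the pure deviation `t` of player `i`. -/
noncomputable def devU (U : (i : ι) → (∀ j, S j) → ℝ) (σ : ∀ j, S j → ℝ) (i : ι) (t : S i) : ℝ :=
  ∑ s : ∀ j, S j, if s i = t then (∏ j ∈ univ.erase i, σ j (s j)) * U i s else 0

theorem EU_update (U : (i : ι) → (∀ j, S j) → ℝ) (σ : ∀ j, S j → ℝ) (i : ι) (τ : S i → ℝ) :
    EU U (Function.update σ i τ) i = ∑ t, τ t * devU U σ i t := by
  unfold EU devU
  simp_rw [Finset.mul_sum]
  rw [Finset.sum_comm]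
  refine Finset.sum_congr rfl fun s _ => ?_
  simp only [mul_ite, mul_zero, Finset.sum_ite_eq, Finset.mem_univ, if_true]
  rw [← Finset.mul_prod_erase univ _ (Finset.mem_univ i)]
  have : ∏ j ∈ univ.erase i, Function.update σ i τ j (s j) = ∏ j ∈ univ.erase i, σ j (s j) := by
    refine Finset.prod_congr rfl fun j hj => ?_
    rw [Function.update_of_ne (Finset.ne_of_mem_erase hj)]
  rw [this, Function.update_self, mul_assoc]

theorem EU_eq (U : (i : ι) → (∀ j, S j) → ℝ) (σ : ∀ j, S j → ℝ) (i : ι) :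
    EU U σ i = ∑ t, σ i t * devU U σ i t := by
  have := EU_update U σ i (σ i)
  rwa [Function.update_eq_self] at this

theorem isDist_single_s16 {α : Type*} [Fintype α] (t : α) : IsDist (Pi.single t (1 : ℝ)) := by
  constructor
  · intro s
    by_cases h : s = t
    · subst h; simp
    · simp [h]
  · simp

theorem EU_single (U : (i : ι) → (∀ j, S j) → ℝ) (σ : ∀ j, S j → ℝ) (i : ι) (t : S i) :
    EU U (Function.update σ i (Pi.single t 1)) i = devU U σ i t := by
  rw [EU_update, Finset.sum_eq_single t]
  · simp
  · intro b _ hb; simp [hb]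
  · simp

theorem nash_of_dev (U : (i : ι) → (∀ j, S j) → ℝ) (σ : ∀ j, S j → ℝ)
    (hd : ∀ i, IsDist (σ i)) (h : ∀ i t, devU U σ i t ≤ EU U σ i) : IsNashEq U σ := by
  refine ⟨hd, fun i τ hτ => ?_⟩
  rw [EU_update]
  calc ∑ t, τ t * devU U σ i t ≤ ∑ t, τ t * EU U σ i :=
        Finset.sum_le_sum fun t _ => mul_le_mul_of_nonneg_left (h i t) (hτ.1 t)
    _ = EU U σ i := by rw [← Finset.sum_mul, hτ.2, one_mul]

theorem dev_le_of_nash (U : (i : ι) → (∀ j, S j) → ℝ) (σ : ∀ j, S j → ℝ)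
    (h : IsNashEq U σ) (i : ι) (t : S i) : devU U σ i t ≤ EU U σ i := by
  rw [← EU_single]
  exact h.2 i _ (isDist_single_s16 t)

theorem dev_eq_of_nash (U : (i : ι) → (∀ j, S j) → ℝ) (σ : ∀ j, S j → ℝ)
    (h : IsNashEq U σ) (i : ι) (t : S i) (ht : σ i t ≠ 0) : devU U σ i t = EU U σ i := by
  have h0 : ∑ t, σ i t * (EU U σ i - devU U σ i t) = 0 := by
    simp_rw [mul_sub]
    rw [Finset.sum_sub_distrib, ← Finset.sum_mul, (h.1 i).2, ← EU_eq]; ring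
  have h1 := (Finset.sum_eq_zero_iff_of_nonneg (fun t _ =>
    mul_nonneg ((h.1 i).1 t) (sub_nonneg.2 (dev_le_of_nash U σ h i t)))).1 h0 t (Finset.mem_univ t)
  rcases mul_eq_zero.1 h1 with h2 | h2
  · exact absurd h2 ht
  · linarith

end aux

section gadget
open Classical

variable {k n m : ℕ} {Shat : Player k → Type} [∀ i, Fintype (Shat i)]

/-- Inclusion of gadget strategies. -/
def inj (Shat : Player k → Type) (n m : ℕ) : ∀ i, Shat i → Strat Shat n m i
  | .inl _, a => Sum.inl a
  | .inr _, a => Sum.inl a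

theorem toGadget_inj (i : Player k) (a : Shat i) : toGadget Shat i (inj Shat n m i a) = some a := by
  cases i <;> rfl

theorem eq_inj_of_toGadget (i : Player k) (t : Strat Shat n m i) (a : Shat i)
    (h : toGadget Shat i t = some a) : t = inj Shat n m i a := by
  rcases i with p | q
  · rcases t with b | b
    · exact congrArg Sum.inl (Option.some.inj h)
    · cases h
  · rcases t with b | b
    · exact congrArg Sum.inl (Option.some.inj h)
    · cases h

theorem eq_inj_of_isSome (i : Player k) (t : Strat Shat n m i)
    (h : (toGadget Shat i t).isSome = true) : ∃ a, t = inj Shat n m i a := by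
  obtain ⟨a, ha⟩ := Option.isSome_iff_exists.1 h
  exact ⟨a, eq_inj_of_toGadget i t a ha⟩

theorem inj_injective (i : Player k) : Function.Injective (inj Shat n m i) := by
  intro a b h
  have := congrArg (toGadget Shat i) h
  simpa [toGadget_inj] using this

theorem lift_inj (σh : ∀ i, Shat i → ℝ) (i : Player k) (a : Shat i) :
    liftProfile (n := n) (m := m) Shat σh i (inj Shat n m i a) = σh i a := by
  cases i <;> rfl

theorem lift_none (σh : ∀ i, Shat i → ℝ) (i : Player k) (t : Strat Shat n m i)
    (h : ¬ (toGadget Shat i t).isSome = true) :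
    liftProfile (n := n) (m := m) Shat σh i t = 0 := by
  rcases i with p | q
  · rcases t with b | b
    · exact absurd rfl h
    · rfl
  · rcases t with b | b
    · exact absurd rfl h
    · rfl

theorem eq_lift (σh : ∀ i, Shat i → ℝ) (i : Player k) (f : Strat Shat n m i → ℝ)
    (h0 : ∀ t, ¬ (toGadget Shat i t).isSome = true → f t = 0)
    (h1 : ∀ a, f (inj Shat n m i a) = σh i a) : f = liftProfile Shat σh i := by
  funext t
  by_cases h : (toGadget Shat i t).isSome = true
  · obtain ⟨a, rfl⟩ := eq_inj_of_isSome i t h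
    rw [h1, lift_inj]
  · rw [h0 t h, lift_none _ _ _ h]

theorem sum_lift (σh : ∀ i, Shat i → ℝ) (i : Player k) :
    ∑ t, liftProfile (n := n) (m := m) Shat σh i t = ∑ a, σh i a := by
  symm
  refine Finset.sum_of_injOn (inj Shat n m i) ((inj_injective i).injOn) (by simp) ?_ ?_
  · intro t _ ht
    refine lift_none _ _ _ fun hs => ht ?_
    obtain ⟨a, rfl⟩ := eq_inj_of_isSome i t hs
    simp
  · intro a _
    rw [lift_inj]

theorem isDist_lift (σh : ∀ i, Shat i → ℝ) (i : Player k) :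
    IsDist (liftProfile (n := n) (m := m) Shat σh i) ↔ IsDist (σh i) := by
  unfold IsDist
  rw [sum_lift]
  refine and_congr_left fun _ => ⟨fun h a => ?_, fun h t => ?_⟩
  · rw [← lift_inj (n := n) (m := m) σh i a]; exact h _
  · by_cases hs : (toGadget Shat i t).isSome = true
    · obtain ⟨a, rfl⟩ := eq_inj_of_isSome i t hs
      rw [lift_inj]; exact h a
    · rw [lift_none _ _ _ hs]

theorem lift_update (σh : ∀ i, Shat i → ℝ) (i : Player k) (τ : Shat i → ℝ)
    (f : Strat Shat n m i → ℝ)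
    (h0 : ∀ t, ¬ (toGadget Shat i t).isSome = true → f t = 0)
    (h1 : ∀ a, f (inj Shat n m i a) = τ a) :
    Function.update (liftProfile (n := n) (m := m) Shat σh) i f
      = liftProfile Shat (Function.update σh i τ) := by
  funext j
  refine eq_lift _ j _ ?_ ?_
  · intro t ht
    by_cases hj : j = i
    · subst hj; rw [Function.update_self]; exact h0 t ht
    · rw [Function.update_of_ne hj]; exact lift_none _ _ _ ht
  · intro a
    by_cases hj : j = i
    · subst hj; rw [Function.update_self, Function.update_self]; exact h1 a
    · rw [Function.update_of_ne hj, Function.update_of_ne hj]; exact lift_inj _ _ _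

variable (Uhat : (i : Player k) → (∀ j, Shat j) → ℝ) (Cl : Fin m → Finset (Lit n))

theorem BigU_inj (i : Player k) (s : ∀ j, Shat j) :
    BigU Shat Uhat Cl i (fun j => inj Shat n m j (s j)) = Uhat i s := by
  unfold BigU
  rw [dif_pos (fun j => by rw [toGadget_inj]; rfl)]
  congr 1
  funext j
  simp [toGadget_inj]

theorem BigU_zero (i j : Player k) (s : ∀ j, Strat Shat n m j)
    (hi : ¬ (toGadget Shat i (s i)).isSome = true) (hj : (toGadget Shat j (s j)).isSome = true) :
    BigU Shat Uhat Cl i s = 0 := by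
  unfold BigU
  rw [dif_neg (fun h => hi (h i))]
  have hpos : 0 < (univ.filter fun j => (toGadget Shat j (s j)).isSome = true).card :=
    Finset.card_pos.2 ⟨j, by simp [hj]⟩
  split_ifs with h1 h2
  · rfl
  · rfl
  · omega

theorem BigU_one (i j l : Player k) (s : ∀ j, Strat Shat n m j) (hij : i ≠ j)
    (hi : (toGadget Shat i (s i)).isSome = true) (hj : (toGadget Shat j (s j)).isSome = true)
    (hl : ¬ (toGadget Shat l (s l)).isSome = true) :
    BigU Shat Uhat Cl i s = 1 := by
  unfold BigU
  rw [dif_neg (fun h => hl (h l)), if_pos, if_pos hi]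
  exact Finset.one_lt_card.2 ⟨i, by simp [hi], j, by simp [hj], hij⟩

theorem pairU_nonneg (a b : SpecialAux n m) :
    0 ≤ (pairU Cl a b).1 ∧ 0 ≤ (pairU Cl a b).2.1 ∧ 0 ≤ (pairU Cl a b).2.2 := by
  rcases a with a | a | a <;> rcases b with b | b | b <;> simp only [pairU] <;> (try split_ifs) <;> simp

theorem BigU_nonneg (hU : ∀ i s, 0 ≤ Uhat i s) (i : Player k) (s : ∀ j, Strat Shat n m j) :
    0 ≤ BigU Shat Uhat Cl i s := by
  unfold BigU
  split_ifs
  · exact hU _ _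
  · exact zero_le_one
  · exact le_rfl
  · rcases i with p | q
    · dsimp only
      split_ifs <;> simp
    · exact zero_le_one
  · exact le_rfl
  · rcases specialOf Shat 0 s with a | a
    · exact le_rfl
    · rcases specialOf Shat 1 s with b | b
      · exact le_rfl
      · have := pairU_nonneg Cl a b
        rcases i with p | q
        · dsimp only
          split_ifs
          · exact this.1
          · exact this.2.1
        · exact this.2.2

theorem EU_lift (σh : ∀ i, Shat i → ℝ) (i : Player k) :
    EU (BigU Shat Uhat Cl) (liftProfile Shat σh) i = EU Uhat σh i := by
  unfold EU
  symm
  refine Finset.sum_of_injOn (fun s j => inj Shat n m j (s j)) ?_ (by simp) ?_ ?_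
  · intro s _ s' _ h
    funext j
    exact inj_injective j (congrFun h j)
  · intro s _ hs
    have : ∃ j, ¬ (toGadget Shat j (s j)).isSome = true := by
      by_contra hc
      push Not at hc
      choose a ha using fun j => eq_inj_of_isSome j (s j) (hc j)
      exact hs ⟨a, by simp, by funext j; exact (ha j).symm⟩
    obtain ⟨j, hj⟩ := this
    rw [Finset.prod_eq_zero (Finset.mem_univ j) (lift_none _ _ _ hj), zero_mul]
  · intro s _
    rw [BigU_inj]
    simp only [lift_inj]

/-- A non-gadget deviation is worthless against a player using only gadget strategies. -/
theorem dev_zero (σ : ∀ i, Strat Shat n m i → ℝ) (i j : Player k) (hij : j ≠ i)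
    (h0 : ∀ t, ¬ (toGadget Shat j t).isSome = true → σ j t = 0)
    (t : Strat Shat n m i) (ht : ¬ (toGadget Shat i t).isSome = true) :
    devU (BigU Shat Uhat Cl) σ i t = 0 := by
  unfold devU
  refine Finset.sum_eq_zero fun s _ => ?_
  split_ifs with hs
  · by_cases hj : (toGadget Shat j (s j)).isSome = true
    · rw [BigU_zero Uhat Cl i j s (by rw [hs]; exact ht) hj, mul_zero]
    · rw [Finset.prod_eq_zero (Finset.mem_erase.2 ⟨hij, Finset.mem_univ j⟩) (h0 _ hj), zero_mul]
  · rfl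

theorem exists_other (i : Player k) : ∃ j : Player k, j ≠ i := by
  by_cases h : i = .inl 0
  · exact ⟨.inl 1, by subst h; simp⟩
  · exact ⟨.inl 0, fun h' => h h'.symm⟩

end gadget

/-- Lemma "f is PNE": for the win-lose game `G = G(Ĝ, φ)` built from an `r`-player
win-lose gadget game `Ĝ` with the positive utility property and a 3SAT formula `φ`
with `n ≥ 4` variables:
(C.1) every Nash equilibrium of `Ĝ`, regarded as a mixed profile of `G`, is a Nash
equilibrium of `G`; and
(C.2) there is no Nash equilibrium of `G` outside `NE(Ĝ)` in which some player's
support is contained in her gadget strategies. -/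
theorem reduction_gadget_equilibria
    {k n m : ℕ} (hn : 4 ≤ n)
    (Shat : Player k → Type) [∀ i, Fintype (Shat i)] [∀ i, Nonempty (Shat i)]
    (Uhat : (i : Player k) → (∀ j, Shat j) → ℝ)
    (hWL : ∀ i s, Uhat i s = 0 ∨ Uhat i s = 1)
    (hPUP : ∀ (i : Player k) (s : ∀ j, Shat j), ∃ t, 0 < Uhat i (Function.update s i t))
    (Cl : Fin m → Finset (Lit n)) (h3 : ∀ c, (Cl c).card = 3) :
    (∀ σh : ∀ i, Shat i → ℝ, IsNashEq Uhat σh →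
      IsNashEq (BigU Shat Uhat Cl) (liftProfile Shat σh)) ∧
    (∀ σ : ∀ i, Strat Shat n m i → ℝ, IsNashEq (BigU Shat Uhat Cl) σ →
      (∃ i, ∀ t, 0 < σ i t → (toGadget Shat i t).isSome = true) →
      ∃ σh : ∀ i, Shat i → ℝ, IsNashEq Uhat σh ∧ σ = liftProfile Shat σh) := by
  have hU : ∀ i s, 0 ≤ Uhat i s := fun i s => by
    rcases hWL i s with h | h <;> rw [h]
    exact zero_le_one
  constructor
  · intro σh hσ
    refine nash_of_dev _ _ (fun i => (isDist_lift σh i).2 (hσ.1 i)) fun i t => ?_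
    rw [EU_lift]
    by_cases ht : (toGadget Shat i t).isSome = true
    · classical
      obtain ⟨a, rfl⟩ := eq_inj_of_isSome i t ht
      rw [← EU_single, lift_update σh i (Pi.single a 1), EU_lift]
      · exact hσ.2 i _ (isDist_single_s16 a)
      · intro t' ht'
        refine Pi.single_eq_of_ne ?_ _
        rintro rfl
        exact ht' ht
      · intro b
        by_cases hb : b = a
        · subst hb; simp
        · rw [Pi.single_eq_of_ne hb, Pi.single_eq_of_ne fun h => hb (inj_injective i h)]
    · obtain ⟨j, hj⟩ := exists_other i
      rw [dev_zero Uhat Cl _ i j hj (fun t ht => lift_none _ _ _ ht) t ht]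
      exact Finset.sum_nonneg fun s _ =>
        mul_nonneg (Finset.prod_nonneg fun j _ => (hσ.1 j).1 _) (hU _ _)
  · rintro σ hσ ⟨i, hi⟩
    have hi0 : ∀ t, ¬ (toGadget Shat i t).isSome = true → σ i t = 0 := fun t ht =>
      le_antisymm (not_lt.1 fun h => ht (hi t h)) ((hσ.1 i).1 t)
    have hsupp : ∀ j, ∃ t, 0 < σ j t := by
      intro j
      by_contra hc
      push Not at hc
      have h1 := Finset.sum_nonpos fun t (_ : t ∈ univ) => hc t
      rw [(hσ.1 j).2] at h1
      linarith
    choose s hs using hsupp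
    have hsi := hi _ (hs i)
    have hall : ∀ j t, ¬ (toGadget Shat j t).isSome = true → σ j t = 0 := by
      intro j
      by_cases hji : j = i
      · subst hji; exact hi0
      intro t ht
      by_contra hne
      have hz := dev_zero Uhat Cl σ j i (Ne.symm hji) hi0 t ht
      rw [dev_eq_of_nash _ σ hσ j t hne] at hz
      obtain ⟨u, hu⟩ : ∃ u, 0 < BigU Shat Uhat Cl j (Function.update s j u) := by
        by_cases hl : ∃ l, l ≠ j ∧ ¬ (toGadget Shat l (s l)).isSome = true
        · obtain ⟨l, hlj, hl⟩ := hl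
          obtain ⟨a⟩ := (inferInstance : Nonempty (Shat j))
          refine ⟨inj Shat n m j a, ?_⟩
          rw [BigU_one Uhat Cl j i l _ hji]
          · exact zero_lt_one
          · rw [Function.update_self, toGadget_inj]; rfl
          · rw [Function.update_of_ne (Ne.symm hji)]; exact hsi
          · rw [Function.update_of_ne hlj]; exact hl
        · push Not at hl
          have hl' : ∀ l, ∃ a, l ≠ j → s l = inj Shat n m l a := by
            intro l
            by_cases h : l = j
            · obtain ⟨a⟩ := (inferInstance : Nonempty (Shat l))
              exact ⟨a, fun h' => absurd h h'⟩
            · obtain ⟨a, ha⟩ := eq_inj_of_isSome l _ (hl l h)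
              exact ⟨a, fun _ => ha⟩
          choose sh hsh using hl'
          obtain ⟨a, ha⟩ := hPUP j sh
          refine ⟨inj Shat n m j a, ?_⟩
          have : Function.update s j (inj Shat n m j a)
              = fun l => inj Shat n m l (Function.update sh j a l) := by
            funext l
            by_cases h : l = j
            · subst h; rw [Function.update_self, Function.update_self]
            · rw [Function.update_of_ne h, Function.update_of_ne h, hsh l h]
          rw [this, BigU_inj]
          exact ha
      have hle := dev_le_of_nash _ σ hσ j u
      have hpos : 0 < devU (BigU Shat Uhat Cl) σ j u := by
        unfold devU
        refine Finset.sum_pos' (fun s' _ => ?_) ⟨Function.update s j u, Finset.mem_univ _, ?_⟩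
        · split_ifs
          · exact mul_nonneg (Finset.prod_nonneg fun l _ => (hσ.1 l).1 _)
              (BigU_nonneg Uhat Cl hU _ _)
          · exact le_rfl
        · rw [if_pos (Function.update_self ..)]
          refine mul_pos (Finset.prod_pos fun l hl => ?_) hu
          rw [Function.update_of_ne (Finset.ne_of_mem_erase hl)]
          exact hs l
      linarith
    obtain ⟨σh, hlift⟩ : ∃ σh : ∀ i, Shat i → ℝ, σ = liftProfile Shat σh :=
      ⟨fun j a => σ j (inj Shat n m j a), funext fun j => eq_lift _ j (σ j) (hall j) fun _ => rfl⟩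
    clear hall hi hi0 hs hsi
    subst hlift
    refine ⟨σh, ⟨fun j => (isDist_lift σh j).1 (hσ.1 j), fun j τ hτ => ?_⟩, rfl⟩
    rw [← EU_lift (n := n) (m := m) Uhat Cl, ← EU_lift (n := n) (m := m) Uhat Cl σh]
    rw [← lift_update (n := n) (m := m) σh j τ
      (liftProfile Shat (Function.update σh j τ) j)
      (fun t ht => lift_none _ _ _ ht) (fun a => by rw [lift_inj, Function.update_self])]
    refine hσ.2 j _ ((isDist_lift _ j).2 ?_)
    rw [Function.update_self]
    exact hτ
end
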